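/- For all integers p ≥ 1, t_0 ≤ −1 and t_1 ≥ 1, the list L = [−2, t_0−1, −(p+1)] followed by t_1−1 copies of −2 has negative continued fraction L⁻ = −2 − (1 + p·t_1)/(−1 + t_0 + t_1 − p·t_1 + p·t_0·t_1); moreover N(L) = −t_0·(p+1) if t_1 = 1 and N(L) = −2·t_0·p if t_1 ≥ 2. (This is the computation for case (e) in the classification.) -/

import Mathlib

/-- The negative continued fraction `[r_0, …, r_k]⁻` of a list of rationals:
`[r_k]⁻ = r_k` and `[r_i, …, r_k]⁻ = r_i − 1/[r_{i+1}, …, r_k]⁻`.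
(The value on the empty list is an irrelevant junk value.) -/
def ncf : List ℚ → ℚ
  | [] => 0
  | [r] => r
  | r :: rs => r - 1 / ncf rs

/-- `N([r_0, …, r_k]) = |(r_0+1)(r_1+1)⋯(r_{k−1}+1)·r_k|`, with `N([r]) = |r|`. -/
def Nval : List ℤ → ℤ
  | [] => 1
  | [r] => |r|
  | r :: rs => |r + 1| * Nval rs

/-
Reading a negative continued fraction from its last entry, prepending `r` turns a value `a / b` into
`(r * a - b) / a`. A run of `n` entries `-2` has value `-(n + 1) / n`, and prepending `-(p + 1)`,
`t₀ - 1` and `-2` to the run with `n + 1 = t₁` takes three such steps. The number `N` is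
multiplicative in every entry but the last.
-/

-- For `l = []` this holds because `ncf [] = 0` and `1 / 0 = 0`.
theorem ncf_cons (r : ℚ) (l : List ℚ) : ncf (r :: l) = r - 1 / ncf l := by
  cases l <;> simp [ncf]

theorem ncf_cons_of_eq_div {l : List ℚ} {a b : ℚ} (r : ℚ) (ha : a ≠ 0) (hl : ncf l = a / b) :
    ncf (r :: l) = (r * a - b) / a := by
  rw [ncf_cons, hl, one_div_div, sub_div, mul_div_cancel_right₀ r ha]

-- For `n = 0` both sides are `0`: the junk value of `ncf []` agrees with division by zero.
theorem ncf_replicate_neg_two (n : ℕ) :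
    ncf (List.replicate n (-2)) = -((n : ℚ) + 1) / n := by
  induction n with
  | zero => simp [ncf]
  | succ n ih =>
    have hn : (n : ℚ) + 1 ≠ 0 := n.cast_add_one_ne_zero
    rw [List.replicate_succ, ncf_cons_of_eq_div _ (neg_ne_zero.mpr hn) ih]
    push_cast
    field_simp
    ring

theorem ncf_cons_replicate_neg_two (p : ℚ) (n : ℕ) :
    ncf (-(p + 1) :: List.replicate n (-2)) = (1 + p * (n + 1)) / -((n : ℚ) + 1) := by
  have hn : -((n : ℚ) + 1) ≠ 0 := neg_ne_zero.mpr n.cast_add_one_ne_zero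
  rw [ncf_cons_of_eq_div _ hn (ncf_replicate_neg_two n)]
  ring

theorem ncf_cons_cons_replicate_neg_two {p : ℚ} {n : ℕ} (t : ℚ) (hp : 1 + p * (n + 1) ≠ 0) :
    ncf ((t - 1) :: -(p + 1) :: List.replicate n (-2)) =
      (-1 + t + (n + 1) - p * (n + 1) + p * t * (n + 1)) / (1 + p * (n + 1)) := by
  rw [ncf_cons_of_eq_div _ hp (ncf_cons_replicate_neg_two p n)]
  ring

theorem ncf_cons_cons_cons_replicate_neg_two {p t : ℚ} {n : ℕ} (r : ℚ)
    (hp : 1 + p * (n + 1) ≠ 0)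
    (ht : -1 + t + (n + 1) - p * (n + 1) + p * t * (n + 1) ≠ 0) :
    ncf (r :: (t - 1) :: -(p + 1) :: List.replicate n (-2)) =
      r - (1 + p * (n + 1)) / (-1 + t + (n + 1) - p * (n + 1) + p * t * (n + 1)) := by
  rw [ncf_cons_of_eq_div r ht (ncf_cons_cons_replicate_neg_two t hp), sub_div,
    mul_div_cancel_right₀ r ht]

theorem Nval_cons (r : ℤ) {l : List ℤ} (hl : l ≠ []) : Nval (r :: l) = |r + 1| * Nval l := by
  cases l with
  | nil => contradiction
  | cons => rfl

theorem Nval_append (l : List ℤ) {l' : List ℤ} (hl' : l' ≠ []) :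
    Nval (l ++ l') = (l.map fun r => |r + 1|).prod * Nval l' := by
  induction l with
  | nil => simp
  | cons r l ih =>
    rw [List.cons_append, Nval_cons r (List.append_ne_nil_of_right_ne_nil l hl'), ih,
      List.map_cons, List.prod_cons, mul_assoc]

theorem Nval_replicate_succ (n : ℕ) (r : ℤ) :
    Nval (List.replicate (n + 1) r) = |r + 1| ^ n * |r| := by
  rw [List.replicate_succ', Nval_append _ (List.cons_ne_nil r []), List.map_replicate,
    List.prod_replicate, Nval]

theorem Nval_append_replicate_neg_two (l : List ℤ) {n : ℕ} (hn : n ≠ 0) :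
    Nval (l ++ List.replicate n (-2)) = (l.map fun r => |r + 1|).prod * 2 := by
  obtain ⟨m, rfl⟩ := Nat.exists_eq_succ_of_ne_zero hn
  rw [Nval_append l (by simp), Nval_replicate_succ]
  norm_num

theorem denominator_neg {p t0 t1 : ℤ} (hp : 1 ≤ p) (h0 : t0 ≤ -1) (h1 : 1 ≤ t1) :
    -1 + t0 + t1 - p * t1 + p * t0 * t1 < 0 := by
  have hpt : t1 ≤ p * t1 := le_mul_of_one_le_left (by lia) hp
  have hptt : p * t1 * t0 ≤ p * t1 * -1 := mul_le_mul_of_nonneg_left h0 (by lia)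
  linarith

theorem stmt7_general (p t0 t1 : ℤ) (h1 : 1 ≤ t1) (hp : 1 + p * t1 ≠ 0)
    (h0 : -1 + t0 + t1 - p * t1 + p * t0 * t1 ≠ 0) :
    ncf (([-2, t0 - 1, -(p + 1)] ++
            List.replicate (t1 - 1).toNat (-2 : ℤ)).map (fun r : ℤ => (r : ℚ))) =
        -2 - (1 + (p : ℚ) * t1) /
          (-1 + (t0 : ℚ) + (t1 : ℚ) - (p : ℚ) * t1 + (p : ℚ) * t0 * t1) ∧
      (t1 = 1 → Nval ([-2, t0 - 1, -(p + 1)] ++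
          List.replicate (t1 - 1).toNat (-2 : ℤ)) = |t0| * |p + 1|) ∧
      (2 ≤ t1 → Nval ([-2, t0 - 1, -(p + 1)] ++
          List.replicate (t1 - 1).toNat (-2 : ℤ)) = 2 * |t0| * |p|) := by
  refine ⟨?_, ?_, fun h2 => ?_⟩
  · obtain ⟨n, rfl⟩ : ∃ n : ℕ, t1 = n + 1 := ⟨(t1 - 1).toNat, by lia⟩
    have hncf := ncf_cons_cons_cons_replicate_neg_two (p := p) (t := t0) (n := n) (-2)
      (mod_cast hp) (mod_cast h0)
    simpa using hncf
  · rintro rfl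
    simp only [List.cons_append, List.nil_append, sub_self, Int.toNat_zero, List.replicate_zero,
      Nval, sub_add_cancel, abs_neg]
    norm_num
  · have hp_abs : |-(p + 1) + 1| = |p| := by rw [neg_add_rev, neg_add_cancel_comm, abs_neg]
    rw [Nval_append_replicate_neg_two _ (by lia)]
    simp only [List.map_cons, List.map_nil, List.prod_cons, List.prod_nil, sub_add_cancel, hp_abs]
    norm_num
    ring

theorem stmt7 (p t0 t1 : ℤ) (hp : 1 ≤ p) (h0 : t0 ≤ -1) (h1 : 1 ≤ t1) :
    ncf (([-2, t0 - 1, -(p + 1)] ++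
            List.replicate (t1 - 1).toNat (-2 : ℤ)).map (fun r : ℤ => (r : ℚ))) =
        -2 - (1 + (p : ℚ) * t1) /
          (-1 + (t0 : ℚ) + (t1 : ℚ) - (p : ℚ) * t1 + (p : ℚ) * t0 * t1) ∧
      (t1 = 1 → Nval ([-2, t0 - 1, -(p + 1)] ++
          List.replicate (t1 - 1).toNat (-2 : ℤ)) = -t0 * (p + 1)) ∧
      (2 ≤ t1 → Nval ([-2, t0 - 1, -(p + 1)] ++
          List.replicate (t1 - 1).toNat (-2 : ℤ)) = -2 * t0 * p) := by
  simpa only [abs_of_neg (show t0 < 0 by lia), abs_of_pos (show 0 < p by lia),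
    abs_of_pos (show 0 < p + 1 by lia), mul_neg, neg_mul] using
    stmt7_general p t0 t1 h1 (by positivity) (denominator_neg hp h0 h1).ne
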